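/- arXiv:2012.15595 — 2 statements merged into one kernel-verified Lean document; each statement's English description precedes it below -/
import Mathlib

section
/- Let p ≥ 1 be an integer, let L_p, μ, ε > 0, let z* ∈ ℝ^d, and let z̃₁ ∈ ℝ^d with ‖z̃₁ − z*‖₂ ≤ R for some R > 0 with μR² > ε. For i ≥ 1 set R_i = R/2^{i−1} and T_i = ⌈(64 L_p R_i^{p−1} / μ)^{2/(p+1)}⌉. Suppose a sequence (z̃_i)_{i≥1} satisfies, for every i ≥ 1, μ‖z̃_{i+1} − z*‖₂² ≤ (16 L_p / p!) · (‖z̃_i − z*‖₂² / (2 T_i))^{(p+1)/2}. Then: (i) ‖z̃_{i+1} − z*‖₂ ≤ R/2^i for every i ≥ 1; (ii) for n = ⌈(1/2) log₂(μR²/ε)⌉ one has μ‖z̃_{n+1} − z*‖₂² ≤ ε; and (iii) the total inner iteration count satisfies Σ_{i=1}^n T_i ≤ n · ((64 L_p R^{p−1}/μ)^{2/(p+1)} + 1). -/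
/-!
A stage that starts within distance `r` of the solution and runs for at least
`(64 L r ^ (p - 1) / μ) ^ (2 / (p + 1))` iterations ends within distance `r / 2`: raising the
iteration count to the power `(p + 1) / 2` inverts the outer exponent, so the guarantee becomes
`16 L r ^ (p + 1) / (64 L r ^ (p - 1) / μ) = μ (r / 2) ^ 2`. Hence the radius halves at every
restart, about `log₂ (μ R ^ 2 / ε) / 2` halvings bring `μ r ^ 2` below `ε`, and no stage is longer
than the first because the stage length increases with `r`.
-/

theorem sq_div_rpow_half {r t : ℝ} (hr : 0 ≤ r) (ht : 0 ≤ t) (n : ℕ) :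
    (r ^ 2 / t) ^ ((n : ℝ) / 2) = r ^ n / t ^ ((n : ℝ) / 2) := by
  have hpow : (r ^ 2) ^ ((n : ℝ) / 2) = r ^ n := by
    rw [← Real.rpow_natCast_mul hr, Nat.cast_ofNat, mul_div_cancel₀ _ two_ne_zero,
      Real.rpow_natCast]
  rw [Real.div_rpow (sq_nonneg r) ht, hpow]

theorem div_pow_pow_le_of_logb_div_le {b c ε : ℝ} {k n : ℕ} (hb : 1 < b) (hc : 0 < c)
    (hε : 0 < ε) (hk : 0 < k) (hn : Real.logb b (c / ε) / k ≤ n) : c / (b ^ n) ^ k ≤ ε := by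
  have : 0 < b := zero_lt_one.trans hb
  have hlog : Real.logb b (c / ε) ≤ (n * k : ℕ) := by
    rw [Nat.cast_mul]
    exact (div_le_iff₀ (Nat.cast_pos.2 hk)).1 hn
  rw [Real.logb_le_iff_le_rpow hb (div_pos hc hε), Real.rpow_natCast, pow_mul] at hlog
  exact (div_le_comm₀ hε (by positivity)).1 hlog

/-- The length, before rounding up, of a stage of the restarted method that starts within distance
`r` of the solution: the paper's `T_i` is `⌈stageLength p L_p μ R_i⌉₊`. -/
noncomputable def stageLength (p : ℕ) (L μ r : ℝ) : ℝ :=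
  (64 * L * r ^ (p - 1) / μ) ^ (2 / ((p : ℝ) + 1))

section Stage

variable {p : ℕ} {L μ r s t x y : ℝ}

theorem stageLength_nonneg (hL : 0 ≤ L) (hμ : 0 ≤ μ) (hr : 0 ≤ r) : 0 ≤ stageLength p L μ r := by
  unfold stageLength
  positivity

theorem stageLength_pos (hL : 0 < L) (hμ : 0 < μ) (hr : 0 < r) : 0 < stageLength p L μ r := by
  unfold stageLength
  positivity

theorem stageLength_le_stageLength (hL : 0 ≤ L) (hμ : 0 ≤ μ) (hr : 0 ≤ r) (hrs : r ≤ s) :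
    stageLength p L μ r ≤ stageLength p L μ s := by
  unfold stageLength
  gcongr

theorem stageLength_le_iff (hL : 0 ≤ L) (hμ : 0 ≤ μ) (hr : 0 ≤ r) (ht : 0 ≤ t) :
    stageLength p L μ r ≤ t ↔ 64 * L * r ^ (p - 1) / μ ≤ t ^ (((p : ℝ) + 1) / 2) := by
  rw [stageLength, ← inv_div ((p : ℝ) + 1) 2]
  exact Real.rpow_inv_le_iff_of_pos (by positivity) ht (by positivity)

theorem stage_guarantee_le (hp : 1 ≤ p) (hL : 0 < L) (hμ : 0 < μ) (hr : 0 < r) (hx : 0 ≤ x)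
    (hxr : x ≤ r) (ht : stageLength p L μ r ≤ t) :
    16 * L / (p.factorial : ℝ) * (x ^ 2 / (2 * t)) ^ (((p : ℝ) + 1) / 2) ≤ μ * (r / 2) ^ 2 := by
  have ht₀ : 0 < t := (stageLength_pos hL hμ hr).trans_le ht
  have hfactorial : 16 * L / (p.factorial : ℝ) ≤ 16 * L :=
    div_le_self (by positivity) (Nat.one_le_cast.2 p.factorial_pos)
  have hbase : x ^ 2 / (2 * t) ≤ r ^ 2 / t := by
    gcongr
    linarith
  have hlength : 64 * L * r ^ (p - 1) / μ ≤ t ^ (((p : ℝ) + 1) / 2) :=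
    (stageLength_le_iff hL.le hμ.le hr.le ht₀.le).1 ht
  calc 16 * L / (p.factorial : ℝ) * (x ^ 2 / (2 * t)) ^ (((p : ℝ) + 1) / 2)
      ≤ 16 * L * (r ^ 2 / t) ^ (((p : ℝ) + 1) / 2) := by gcongr
    _ = 16 * L * (r ^ (p + 1) / t ^ (((p : ℝ) + 1) / 2)) := by
        rw [← Nat.cast_add_one, sq_div_rpow_half hr.le ht₀.le]
    _ ≤ 16 * L * (r ^ (p + 1) / (64 * L * r ^ (p - 1) / μ)) := by gcongr
    _ = μ * (r / 2) ^ 2 := by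
        obtain ⟨m, rfl⟩ := Nat.exists_eq_add_of_le' hp
        rw [Nat.add_sub_cancel]
        field_simp
        ring

theorem le_half_of_stage_guarantee (hp : 1 ≤ p) (hL : 0 < L) (hμ : 0 < μ) (hr : 0 < r)
    (hx : 0 ≤ x) (hxr : x ≤ r) (ht : stageLength p L μ r ≤ t)
    (hy : μ * y ^ 2 ≤ 16 * L / (p.factorial : ℝ) * (x ^ 2 / (2 * t)) ^ (((p : ℝ) + 1) / 2)) :
    y ≤ r / 2 := by
  have hsq : y ^ 2 ≤ (r / 2) ^ 2 :=
    le_of_mul_le_mul_left (hy.trans (stage_guarantee_le hp hL hμ hr hx hxr ht)) hμ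
  exact le_of_abs_le (abs_le_of_sq_le_sq hsq (half_pos hr).le)

theorem sum_ceil_stageLength_le {R : ℝ} (hL : 0 ≤ L) (hμ : 0 ≤ μ) (hR : 0 ≤ R) (n : ℕ) :
    ∑ i ∈ Finset.Icc 1 n, (⌈stageLength p L μ (R / 2 ^ (i - 1))⌉₊ : ℝ)
      ≤ n * (stageLength p L μ R + 1) := by
  have hstage : ∀ i ∈ Finset.Icc 1 n,
      (⌈stageLength p L μ (R / 2 ^ (i - 1))⌉₊ : ℝ) ≤ stageLength p L μ R + 1 := fun i _ => by
    have hradius : R / 2 ^ (i - 1) ≤ R := div_le_self hR (one_le_pow₀ one_le_two)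
    calc (⌈stageLength p L μ (R / 2 ^ (i - 1))⌉₊ : ℝ)
        ≤ stageLength p L μ (R / 2 ^ (i - 1)) + 1 :=
          (Nat.ceil_lt_add_one (stageLength_nonneg hL hμ (by positivity))).le
      _ ≤ stageLength p L μ R + 1 := by
          gcongr
          exact stageLength_le_stageLength hL hμ (by positivity) hradius
  simpa only [Nat.card_Icc, Nat.add_sub_cancel, nsmul_eq_mul] using
    Finset.sum_le_card_nsmul _ _ _ hstage

end Stage

section Restart

variable {X : Type*} [PseudoMetricSpace X] {p : ℕ} {L μ ε R : ℝ} {zstar : X} {zt : ℕ → X}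
  {T : ℕ → ℕ}

theorem dist_restart_le (hp : 1 ≤ p) (hL : 0 < L) (hμ : 0 < μ) (hR : 0 < R)
    (hinit : dist (zt 1) zstar ≤ R)
    (hT : ∀ i ≥ 1, stageLength p L μ (R / 2 ^ (i - 1)) ≤ T i)
    (hstep : ∀ i ≥ 1, μ * dist (zt (i + 1)) zstar ^ 2
      ≤ 16 * L / (p.factorial : ℝ)
          * (dist (zt i) zstar ^ 2 / (2 * (T i : ℝ))) ^ (((p : ℝ) + 1) / 2)) (i : ℕ) :
    dist (zt (i + 1)) zstar ≤ R / 2 ^ i := by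
  induction i with
  | zero => simpa only [zero_add, pow_zero, div_one] using hinit
  | succ k ih =>
    rw [pow_succ, ← div_div]
    exact le_half_of_stage_guarantee hp hL hμ (by positivity) dist_nonneg ih
      (hT (k + 1) k.succ_pos) (hstep (k + 1) k.succ_pos)

theorem mul_sq_le_of_le_div_two_pow {x : ℝ} {n : ℕ} (hμ : 0 < μ) (hε : 0 < ε) (hR : 0 < R)
    (hx : 0 ≤ x) (hxn : x ≤ R / 2 ^ n) (hn : Real.logb 2 (μ * R ^ 2 / ε) / 2 ≤ n) :
    μ * x ^ 2 ≤ ε :=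
  calc μ * x ^ 2 ≤ μ * (R / 2 ^ n) ^ 2 := by gcongr
    _ = μ * R ^ 2 / (2 ^ n) ^ 2 := by rw [div_pow, mul_div_assoc]
    _ ≤ ε := div_pow_pow_le_of_logb_div_le one_lt_two (by positivity) hε two_pos hn

theorem restarted_highOrderMirrorProx_complexity_general (hp : 1 ≤ p) (hL : 0 < L) (hμ : 0 < μ)
    (hε : 0 < ε) (hR : 0 < R) (hinit : dist (zt 1) zstar ≤ R)
    (hT : ∀ i ≥ 1, T i = ⌈stageLength p L μ (R / 2 ^ (i - 1))⌉₊)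
    (hstep : ∀ i ≥ 1, μ * dist (zt (i + 1)) zstar ^ 2
      ≤ 16 * L / (p.factorial : ℝ)
          * (dist (zt i) zstar ^ 2 / (2 * (T i : ℝ))) ^ (((p : ℝ) + 1) / 2)) :
    (∀ i, dist (zt (i + 1)) zstar ≤ R / 2 ^ i) ∧
    (μ * dist (zt (⌈Real.logb 2 (μ * R ^ 2 / ε) / 2⌉₊ + 1)) zstar ^ 2 ≤ ε) ∧
    ((∑ i ∈ Finset.Icc 1 ⌈Real.logb 2 (μ * R ^ 2 / ε) / 2⌉₊, (T i : ℝ))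
      ≤ (⌈Real.logb 2 (μ * R ^ 2 / ε) / 2⌉₊ : ℝ) * (stageLength p L μ R + 1)) := by
  have hlength : ∀ i ≥ 1, stageLength p L μ (R / 2 ^ (i - 1)) ≤ T i := fun i hi =>
    hT i hi ▸ Nat.le_ceil _
  have hdist := dist_restart_le hp hL hμ hR hinit hlength hstep
  refine ⟨hdist,
    mul_sq_le_of_le_div_two_pow hμ hε hR dist_nonneg (hdist _) (Nat.le_ceil _), ?_⟩
  rw [Finset.sum_congr rfl fun i hi => congrArg Nat.cast (hT i (Finset.mem_Icc.1 hi).1)]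
  exact sum_ceil_stageLength_le hL.le hμ.le hR.le _

end Restart

/-- Complexity of the restarted HighOrderMirrorProx method (Theorem 1 of the paper).
Given the per-stage guarantee
`μ‖z̃_{i+1} − z*‖² ≤ (16 L_p/p!) (‖z̃_i − z*‖²/(2 T_i))^{(p+1)/2}` with
`T_i = ⌈(64 L_p R_i^{p−1}/μ)^{2/(p+1)}⌉`, `R_i = R/2^{i−1}`, one gets
(i) geometric decrease `‖z̃_{i+1} − z*‖ ≤ R/2^i`,
(ii) `μ‖z̃_{n+1} − z*‖² ≤ ε` for `n = ⌈(1/2) log₂(μR²/ε)⌉`, and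
(iii) total inner iteration count `Σ_{i=1}^n T_i ≤ n((64 L_p R^{p−1}/μ)^{2/(p+1)} + 1)`. -/
theorem restarted_highOrderMirrorProx_complexity {d : ℕ} (p : ℕ) (hp : 1 ≤ p)
    (L μ ε R : ℝ) (hL : 0 < L) (hμ : 0 < μ) (hε : 0 < ε) (hR : 0 < R)
    (hεR : ε < μ * R ^ 2)
    (zstar : EuclideanSpace ℝ (Fin d)) (zt : ℕ → EuclideanSpace ℝ (Fin d))
    (hinit : ‖zt 1 - zstar‖ ≤ R)
    (T : ℕ → ℕ)
    (hT : ∀ i, T i = ⌈(64 * L * (R / 2 ^ (i - 1)) ^ (p - 1) / μ) ^ (2 / ((p : ℝ) + 1))⌉₊)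
    (hstep : ∀ i ≥ 1, μ * ‖zt (i + 1) - zstar‖ ^ 2
      ≤ 16 * L / (Nat.factorial p : ℝ)
          * (‖zt i - zstar‖ ^ 2 / (2 * (T i : ℝ))) ^ (((p : ℝ) + 1) / 2)) :
    (∀ i ≥ 1, ‖zt (i + 1) - zstar‖ ≤ R / 2 ^ i) ∧
    (μ * ‖zt (⌈Real.logb 2 (μ * R ^ 2 / ε) / 2⌉₊ + 1) - zstar‖ ^ 2 ≤ ε) ∧
    ((∑ i ∈ Finset.Icc 1 ⌈Real.logb 2 (μ * R ^ 2 / ε) / 2⌉₊, (T i : ℝ))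
      ≤ (⌈Real.logb 2 (μ * R ^ 2 / ε) / 2⌉₊ : ℝ)
          * ((64 * L * R ^ (p - 1) / μ) ^ (2 / ((p : ℝ) + 1)) + 1)) := by
  simp only [← dist_eq_norm] at hinit hstep ⊢
  exact (restarted_highOrderMirrorProx_complexity_general hp hL hμ hε hR hinit (fun i _ => hT i)
    hstep).imp_left fun hdist i _ => hdist i
end

section
/- Let g : ℝ^n × ℝ^m → ℝ be differentiable, μ-strongly convex in x, μ-strongly concave in y, and with L₁-Lipschitz gradient, and let z* = (x*, y*) be its (unique) saddle point, so that ∇g(z*) = 0. Then for every z = (x,y) ∈ ℝ^n × ℝ^m, the duality gap satisfies G(x,y) ≤ (L₁³/(2μ²))·‖z − z*‖₂². -/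
open scoped RealInnerProductSpace

/-- Partial gradient in the first (minimization) variable. -/
noncomputable def gradX {n m : ℕ}
    (g : EuclideanSpace ℝ (Fin n) × EuclideanSpace ℝ (Fin m) → ℝ)
    (x : EuclideanSpace ℝ (Fin n)) (y : EuclideanSpace ℝ (Fin m)) :
    EuclideanSpace ℝ (Fin n) :=
  gradient (fun x' => g (x', y)) x

/-- Partial gradient in the second (maximization) variable. -/
noncomputable def gradY {n m : ℕ}
    (g : EuclideanSpace ℝ (Fin n) × EuclideanSpace ℝ (Fin m) → ℝ)
    (x : EuclideanSpace ℝ (Fin n)) (y : EuclideanSpace ℝ (Fin m)) :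
    EuclideanSpace ℝ (Fin m) :=
  gradient (fun y' => g (x, y')) y

/-!
A `μ`-strongly convex function stays above its quadratic lower model at any point `u`, and
minimizing the model gives the Polyak–Łojasiewicz bound `f u - inf f ≤ ‖∇f u‖² / (2μ)`. Applied to
`g (·, y)` and `-g (x, ·)`, and summed, this bounds the duality gap by `‖∇g z‖² / (2μ)`. The
gradient vanishes at the saddle point, so the Lipschitz condition turns this into
`L² / (2μ) * ‖z - z*‖²`. Strong monotonicity against the Lipschitz condition gives
`μ ‖z - z*‖² ≤ L ‖z - z*‖²`, which accounts for the remaining factor `L / μ`.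
-/

/-- `μ`-strong monotonicity of a vector field. For the gradient of a differentiable function it is
the `μ`-strong convexity of the function. -/
def StronglyMonotone {E : Type*} [NormedAddCommGroup E] [InnerProductSpace ℝ E]
    (μ : ℝ) (G : E → E) : Prop :=
  ∀ u v, μ * ‖u - v‖ ^ 2 ≤ ⟪G u - G v, u - v⟫

/-- The duality gap of the min-max problem for `g` (minimized in the first variable, maximized in
the second) at `(x, y)`. An unbounded slice would contribute `0` to it; for a strongly
convex–strongly concave `g` the slices are bounded, so that this is the true gap. -/
noncomputable def dualityGap {X Y : Type*} (g : X → Y → ℝ) (x : X) (y : Y) : ℝ :=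
  (⨆ y', g x y') - ⨅ x', g x' y

lemma dualityGap_le {X Y : Type*} {g : X → Y → ℝ} {x : X} {y : Y} {a b : ℝ}
    (ha : ∀ x', g x y - g x' y ≤ a) (hb : ∀ y', g x y' - g x y ≤ b) :
    dualityGap g x y ≤ a + b := by
  have : Nonempty X := ⟨x⟩
  have : Nonempty Y := ⟨y⟩
  have hsup : ⨆ y', g x y' ≤ g x y + b := ciSup_le fun y' => sub_le_iff_le_add'.1 (hb y')
  have hinf : g x y - a ≤ ⨅ x', g x' y := le_ciInf fun x' => sub_le_comm.1 (ha x')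
  unfold dualityGap
  linarith

lemma hasGradientAt_neg {𝕜 E : Type*} [RCLike 𝕜] [NormedAddCommGroup E] [InnerProductSpace 𝕜 E]
    [CompleteSpace E] {f : E → 𝕜} {f' u : E} (hf : HasGradientAt f f' u) :
    HasGradientAt (fun v => -f v) (-f') u := by
  rw [hasGradientAt_iff_hasFDerivAt, map_neg]
  exact hf.hasFDerivAt.neg

section StrongMonotonicity

variable {E : Type*} [NormedAddCommGroup E] [InnerProductSpace ℝ E] {μ : ℝ} {G : E → E}

namespace StronglyMonotone

lemma mul_norm_sub_le (hG : StronglyMonotone μ G) (u v : E) :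
    μ * ‖u - v‖ ≤ ‖G u - G v‖ := by
  rcases (norm_nonneg (u - v)).eq_or_lt with h | h
  · simp [← h]
  · refine le_of_mul_le_mul_right ?_ h
    calc μ * ‖u - v‖ * ‖u - v‖ = μ * ‖u - v‖ ^ 2 := by ring
      _ ≤ ⟪G u - G v, u - v⟫ := hG u v
      _ ≤ ‖G u - G v‖ * ‖u - v‖ := real_inner_le_norm _ _

lemma inner_add_mul_le_inner_add_smul (hG : StronglyMonotone μ G) (u d : E) {t : ℝ} (ht : 0 ≤ t) :
    ⟪G u, d⟫ + μ * ‖d‖ ^ 2 * t ≤ ⟪G (u + t • d), d⟫ := by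
  rcases ht.eq_or_lt with rfl | ht
  · simp
  · have h := hG (u + t • d) u
    rw [add_sub_cancel_left, inner_smul_right, norm_smul, mul_pow, Real.norm_eq_abs, sq_abs,
      inner_sub_left] at h
    refine le_of_mul_le_mul_left ?_ ht
    linarith

variable [CompleteSpace E] {f : E → ℝ}

lemma add_inner_add_sq_le (hG : StronglyMonotone μ G) (hf : ∀ u, HasGradientAt f (G u) u)
    (u v : E) :
    f u + ⟪G u, v - u⟫ + μ / 2 * ‖v - u‖ ^ 2 ≤ f v := by
  set d := v - u with hd
  let q : ℝ → ℝ := fun t => f u + t * ⟪G u, d⟫ + μ / 2 * ‖d‖ ^ 2 * t ^ 2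
  have hq (t : ℝ) : HasDerivAt q (⟪G u, d⟫ + μ * ‖d‖ ^ 2 * t) t := by
    refine ((((hasDerivAt_id t).mul_const ⟪G u, d⟫).const_add (f u)).add
      (((hasDerivAt_id t).pow 2).const_mul (μ / 2 * ‖d‖ ^ 2))).congr_deriv ?_
    simp only [one_mul, Nat.cast_ofNat, id_eq, Nat.add_one_sub_one, pow_one, mul_one]
    ring
  have hline (t : ℝ) : HasDerivAt (fun s : ℝ => f (u + s • d)) ⟪G (u + t • d), d⟫ t := by
    have hd' : HasDerivAt (fun s : ℝ => u + s • d) d t := by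
      simpa using ((hasDerivAt_id t).smul_const d).const_add u
    simpa [Function.comp_def] using (hf (u + t • d)).hasFDerivAt.comp_hasDerivAt t hd'
  have hle : q 1 ≤ f (u + (1 : ℝ) • d) :=
    image_le_of_deriv_right_le_deriv_boundary
      (fun t _ => (hq t).continuousAt.continuousWithinAt) (fun t _ => (hq t).hasDerivWithinAt)
      (by simp [q])
      (fun t _ => (hline t).continuousAt.continuousWithinAt)
      (fun t _ => (hline t).hasDerivWithinAt)
      (fun t ht => hG.inner_add_mul_le_inner_add_smul u d ht.1) (Set.right_mem_Icc.2 zero_le_one)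
  simpa [q, hd] using hle

lemma sub_le_norm_sq_div (hμ : 0 < μ) (hG : StronglyMonotone μ G)
    (hf : ∀ u, HasGradientAt f (G u) u) (u v : E) :
    f u - f v ≤ ‖G u‖ ^ 2 / (2 * μ) := by
  have hmodel := hG.add_inner_add_sq_le hf u v
  have hsquare : 0 ≤ ‖G u + μ • (v - u)‖ ^ 2 := sq_nonneg _
  rw [norm_add_sq_real, inner_smul_right, norm_smul, mul_pow, Real.norm_eq_abs, sq_abs] at hsquare
  rw [le_div_iff₀ (by positivity)]
  linarith [mul_le_mul_of_nonneg_left hmodel hμ.le]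

end StronglyMonotone

variable [CompleteSpace E] {f : E → ℝ} {f' u : E}

lemma hasGradientAt_eq_zero_of_isLocalExtr (hf : HasGradientAt f f' u) (hu : IsLocalExtr f u) :
    f' = 0 := by
  simpa using hu.hasFDerivAt_eq_zero hf.hasFDerivAt

end StrongMonotonicity

section MinMax

variable {E F : Type*} [NormedAddCommGroup E] [InnerProductSpace ℝ E]
  [NormedAddCommGroup F] [InnerProductSpace ℝ F] {gX : E → F → E} {gY : E → F → F}
  {μ L : ℝ} {x₀ : E} {y₀ : F}

lemma mul_norm_sub_sq_le_of_stronglyMonotone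
    (hconv : ∀ y, StronglyMonotone μ (gX · y)) (hconc : ∀ x, StronglyMonotone μ (-gY x ·))
    (hLip : ∀ x y, √(‖gX x y - gX x₀ y₀‖ ^ 2 + ‖gY x y - gY x₀ y₀‖ ^ 2)
      ≤ L * √(‖x - x₀‖ ^ 2 + ‖y - y₀‖ ^ 2)) (x : E) (y : F) :
    μ * (‖x - x₀‖ ^ 2 + ‖y - y₀‖ ^ 2) ≤ L * (‖x - x₀‖ ^ 2 + ‖y - y₀‖ ^ 2) := by
  have hx : μ * ‖x - x₀‖ ≤ L * ‖x - x₀‖ :=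
    calc μ * ‖x - x₀‖ ≤ ‖gX x y₀ - gX x₀ y₀‖ := (hconv y₀).mul_norm_sub_le x x₀
      _ ≤ √(‖gX x y₀ - gX x₀ y₀‖ ^ 2 + ‖gY x y₀ - gY x₀ y₀‖ ^ 2) :=
        Real.le_sqrt_of_sq_le (le_add_of_nonneg_right (sq_nonneg _))
      _ ≤ L * ‖x - x₀‖ := by simpa using hLip x y₀
  have hy : μ * ‖y - y₀‖ ≤ L * ‖y - y₀‖ :=
    calc μ * ‖y - y₀‖ ≤ ‖-gY x₀ y - -gY x₀ y₀‖ := (hconc x₀).mul_norm_sub_le y y₀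
      _ = ‖gY x₀ y - gY x₀ y₀‖ := by rw [neg_sub_neg, norm_sub_rev]
      _ ≤ √(‖gX x₀ y - gX x₀ y₀‖ ^ 2 + ‖gY x₀ y - gY x₀ y₀‖ ^ 2) :=
        Real.le_sqrt_of_sq_le (le_add_of_nonneg_left (sq_nonneg _))
      _ ≤ L * ‖y - y₀‖ := by simpa using hLip x₀ y
  linarith [mul_le_mul_of_nonneg_right hx (norm_nonneg (x - x₀)),
    mul_le_mul_of_nonneg_right hy (norm_nonneg (y - y₀))]

variable [CompleteSpace E] [CompleteSpace F] {g : E → F → ℝ}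

lemma dualityGap_le_norm_gradient_sq (hμ : 0 < μ)
    (hX : ∀ x y, HasGradientAt (g · y) (gX x y) x) (hY : ∀ x y, HasGradientAt (g x ·) (gY x y) y)
    (hconv : ∀ y, StronglyMonotone μ (gX · y)) (hconc : ∀ x, StronglyMonotone μ (-gY x ·))
    (x : E) (y : F) :
    dualityGap g x y ≤ (‖gX x y‖ ^ 2 + ‖gY x y‖ ^ 2) / (2 * μ) := by
  rw [add_div]
  refine dualityGap_le (fun x' => (hconv y).sub_le_norm_sq_div hμ (hX · y) x x') fun y' => ?_
  have h := (hconc x).sub_le_norm_sq_div hμ (fun v => hasGradientAt_neg (hY x v)) y y'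
  rwa [neg_sub_neg, norm_neg] at h

lemma gradient_eq_zero_of_isSaddlePointOn_univ {a : E} {b : F}
    (hX : HasGradientAt (g · y₀) a x₀) (hY : HasGradientAt (g x₀ ·) b y₀)
    (hsaddle : IsSaddlePointOn Set.univ Set.univ g x₀ y₀) :
    a = 0 ∧ b = 0 := by
  have hmin : IsLocalMin (g · y₀) x₀ :=
    Filter.Eventually.of_forall fun x => hsaddle x trivial y₀ trivial
  have hmax : IsLocalMax (g x₀ ·) y₀ :=
    Filter.Eventually.of_forall fun y => hsaddle x₀ trivial y trivial
  exact ⟨hasGradientAt_eq_zero_of_isLocalExtr hX (.inl hmin),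
    hasGradientAt_eq_zero_of_isLocalExtr hY (.inr hmax)⟩

lemma dualityGap_le_norm_sub_sq (hμ : 0 < μ)
    (hX : ∀ x y, HasGradientAt (g · y) (gX x y) x) (hY : ∀ x y, HasGradientAt (g x ·) (gY x y) y)
    (hconv : ∀ y, StronglyMonotone μ (gX · y)) (hconc : ∀ x, StronglyMonotone μ (-gY x ·))
    (hLip : ∀ x y, √(‖gX x y - gX x₀ y₀‖ ^ 2 + ‖gY x y - gY x₀ y₀‖ ^ 2)
      ≤ L * √(‖x - x₀‖ ^ 2 + ‖y - y₀‖ ^ 2))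
    (hsaddle : IsSaddlePointOn Set.univ Set.univ g x₀ y₀) (x : E) (y : F) :
    dualityGap g x y ≤ L ^ 2 / (2 * μ) * (‖x - x₀‖ ^ 2 + ‖y - y₀‖ ^ 2) := by
  obtain ⟨hX₀, hY₀⟩ := gradient_eq_zero_of_isSaddlePointOn_univ (hX x₀ y₀) (hY x₀ y₀) hsaddle
  have hgrad : ‖gX x y‖ ^ 2 + ‖gY x y‖ ^ 2 ≤ L ^ 2 * (‖x - x₀‖ ^ 2 + ‖y - y₀‖ ^ 2) := by
    have h := hLip x y
    rw [hX₀, hY₀, sub_zero, sub_zero, Real.sqrt_le_iff, mul_pow,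
      Real.sq_sqrt (by positivity)] at h
    exact h.2
  calc dualityGap g x y ≤ (‖gX x y‖ ^ 2 + ‖gY x y‖ ^ 2) / (2 * μ) :=
        dualityGap_le_norm_gradient_sq hμ hX hY hconv hconc x y
    _ ≤ L ^ 2 * (‖x - x₀‖ ^ 2 + ‖y - y₀‖ ^ 2) / (2 * μ) := by gcongr
    _ = L ^ 2 / (2 * μ) * (‖x - x₀‖ ^ 2 + ‖y - y₀‖ ^ 2) := by ring

theorem duality_gap_distance_bound_general (hμ : 0 < μ)
    (hX : ∀ x y, HasGradientAt (g · y) (gX x y) x) (hY : ∀ x y, HasGradientAt (g x ·) (gY x y) y)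
    (hconv : ∀ y, StronglyMonotone μ (gX · y)) (hconc : ∀ x, StronglyMonotone μ (-gY x ·))
    (hLip : ∀ x y, √(‖gX x y - gX x₀ y₀‖ ^ 2 + ‖gY x y - gY x₀ y₀‖ ^ 2)
      ≤ L * √(‖x - x₀‖ ^ 2 + ‖y - y₀‖ ^ 2))
    (hsaddle : IsSaddlePointOn Set.univ Set.univ g x₀ y₀) (x : E) (y : F) :
    dualityGap g x y ≤ L ^ 3 / (2 * μ ^ 2) * (‖x - x₀‖ ^ 2 + ‖y - y₀‖ ^ 2) := by
  have hμL := mul_norm_sub_sq_le_of_stronglyMonotone hconv hconc hLip x y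
  set D := ‖x - x₀‖ ^ 2 + ‖y - y₀‖ ^ 2
  calc dualityGap g x y ≤ L ^ 2 / (2 * μ) * D :=
        dualityGap_le_norm_sub_sq hμ hX hY hconv hconc hLip hsaddle x y
    _ = L ^ 2 / (2 * μ ^ 2) * (μ * D) := by field_simp
    _ ≤ L ^ 2 / (2 * μ ^ 2) * (L * D) := by gcongr
    _ = L ^ 3 / (2 * μ ^ 2) * D := by ring

end MinMax

section PartialGradients

variable {n m : ℕ} {g : EuclideanSpace ℝ (Fin n) × EuclideanSpace ℝ (Fin m) → ℝ}

lemma hasGradientAt_gradX (hg : Differentiable ℝ g) (x : EuclideanSpace ℝ (Fin n))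
    (y : EuclideanSpace ℝ (Fin m)) : HasGradientAt (fun x' => g (x', y)) (gradX g x y) x :=
  DifferentiableAt.hasGradientAt (by fun_prop)

lemma hasGradientAt_gradY (hg : Differentiable ℝ g) (x : EuclideanSpace ℝ (Fin n))
    (y : EuclideanSpace ℝ (Fin m)) : HasGradientAt (fun y' => g (x, y')) (gradY g x y) y :=
  DifferentiableAt.hasGradientAt (by fun_prop)

end PartialGradients

/-- For a differentiable, `μ`-strongly-convex–strongly-concave `g` with `L₁`-Lipschitz
gradient and saddle point `z* = (x*, y*)`, the duality gap satisfies
`G(x,y) ≤ (L₁³/(2μ²)) ‖z − z*‖²`. -/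
theorem duality_gap_distance_bound {n m : ℕ}
    (g : EuclideanSpace ℝ (Fin n) × EuclideanSpace ℝ (Fin m) → ℝ)
    (μ L₁ : ℝ) (hμ : 0 < μ) (hL₁ : 0 < L₁)
    (hg : Differentiable ℝ g)
    (hconv : ∀ x₁ x₂ y, ⟪gradX g x₁ y - gradX g x₂ y, x₁ - x₂⟫ ≥ μ * ‖x₁ - x₂‖ ^ 2)
    (hconc : ∀ x y₁ y₂, ⟪-gradY g x y₁ + gradY g x y₂, y₁ - y₂⟫ ≥ μ * ‖y₁ - y₂‖ ^ 2)
    (hLip : ∀ x₁ y₁ x₂ y₂,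
      Real.sqrt (‖gradX g x₁ y₁ - gradX g x₂ y₂‖ ^ 2 + ‖gradY g x₁ y₁ - gradY g x₂ y₂‖ ^ 2)
        ≤ L₁ * Real.sqrt (‖x₁ - x₂‖ ^ 2 + ‖y₁ - y₂‖ ^ 2))
    (xstar : EuclideanSpace ℝ (Fin n)) (ystar : EuclideanSpace ℝ (Fin m))
    (hsaddle : ∀ x y, g (xstar, y) ≤ g (xstar, ystar) ∧ g (xstar, ystar) ≤ g (x, ystar)) :
    ∀ x y,
      (⨆ y', g (x, y')) - (⨅ x', g (x', y))
        ≤ L₁ ^ 3 / (2 * μ ^ 2) * (‖x - xstar‖ ^ 2 + ‖y - ystar‖ ^ 2) :=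
  duality_gap_distance_bound_general (g := fun x y => g (x, y)) hμ (hasGradientAt_gradX hg)
    (hasGradientAt_gradY hg) (fun y x₁ x₂ => hconv x₁ x₂ y)
    (fun x y₁ y₂ => by simpa only [sub_neg_eq_add] using hconc x y₁ y₂)
    (hLip · · xstar ystar) fun x _ y _ => (hsaddle x y).1.trans (hsaddle x y).2
end
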